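/- Let D be an ADF and let v be a strongly admissible interpretation of D. Then v is a conflict-free interpretation of D. -/

import Mathlib

/-- Three truth values: true, false, undecided. -/
inductive TV : Type
  | t | f | u
deriving DecidableEq, Repr

/-- The information order on truth values: u <_i t and u <_i f. -/
def TV.ile (x y : TV) : Prop := x = TV.u ∨ x = y

/-- The information order on interpretations, extended pointwise. -/
def ILE {A : Type*} (v w : A → TV) : Prop := ∀ a, TV.ile (v a) (w a)

/-- An abstract dialectical framework on a set of arguments `A`:
each argument `a` has an acceptance condition `C a : (A → Bool) → Bool`. -/
structure ADF (A : Type*) where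
  C : A → (A → Bool) → Bool

/-- The trivial interpretation mapping every argument to undecided. -/
def trivialInterp (A : Type*) : A → TV := fun _ => TV.u

/-- The parents of `a` are the arguments on which its acceptance condition depends. -/
def ADF.parents {A : Type*} [DecidableEq A] (D : ADF A) (a : A) : Set A :=
  {b | ∃ w : A → Bool, D.C a w ≠ D.C a (Function.update w b (!w b))}

/-- A two-valued assignment `w` completes a three-valued interpretation `v`. -/
def Completes {A : Type*} (w : A → Bool) (v : A → TV) : Prop :=
  ∀ b, (v b = TV.t → w b = true) ∧ (v b = TV.f → w b = false)

/-- `φ` is irrefutable under `v`: every completion of `v` makes `φ` true. -/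
def Irrefutable {A : Type*} (φ : (A → Bool) → Bool) (v : A → TV) : Prop :=
  ∀ w : A → Bool, Completes w v → φ w = true

/-- `φ` is unsatisfiable under `v`: every completion of `v` makes `φ` false. -/
def Unsat {A : Type*} (φ : (A → Bool) → Bool) (v : A → TV) : Prop :=
  ∀ w : A → Bool, Completes w v → φ w = false

open Classical in
/-- The characteristic operator Γ_D of an ADF. -/
noncomputable def Gamma {A : Type*} (D : ADF A) (v : A → TV) : A → TV := fun a =>
  if Irrefutable (D.C a) v then TV.t
  else if Unsat (D.C a) v then TV.f
  else TV.u

open Classical in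
/-- `v|_P`: agrees with `v` on `P` and is undecided elsewhere. -/
noncomputable def restrictTV {A : Type*} (v : A → TV) (P : Set A) : A → TV :=
  fun b => if b ∈ P then v b else TV.u

/-- Strong acceptability/deniability of an argument with respect to interpretation `v`
and set `S`, relative to an excluded set `E` (the first index). An argument `a` with
`v a = t` (resp. `v a = f`) is strongly acceptable (resp. strongly deniable) iff there is
`P ⊆ (parents a ∩ S) \ E` with `φ_a^{v|_P}` irrefutable (resp. unsatisfiable) and every
`p ∈ P` strongly acceptable/deniable relative to `E ∪ {p}`. -/
inductive SJrel {A : Type*} [DecidableEq A] (D : ADF A) (v : A → TV) (S : Set A) :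
    Set A → A → Prop
  | acc (E : Set A) (a : A) (P : Set A)
      (ha : v a = TV.t)
      (hP : P ⊆ (D.parents a ∩ S) \ E)
      (hirr : Irrefutable (D.C a) (restrictTV v P))
      (hrec : ∀ p ∈ P, SJrel D v S (E ∪ {p}) p) : SJrel D v S E a
  | den (E : Set A) (a : A) (P : Set A)
      (ha : v a = TV.f)
      (hP : P ⊆ (D.parents a ∩ S) \ E)
      (hunsat : Unsat (D.C a) (restrictTV v P))
      (hrec : ∀ p ∈ P, SJrel D v S (E ∪ {p}) p) : SJrel D v S E a

/-- `a` is strongly acceptable/deniable w.r.t. `v` and `S`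
(i.e., relative to the excluded set `{a}`). -/
def StronglyJustified {A : Type*} [DecidableEq A] (D : ADF A) (v : A → TV)
    (S : Set A) (a : A) : Prop :=
  SJrel D v S {a} a

/-- `S` is a least set for `a` with respect to `v`. -/
def LeastSet {A : Type*} [DecidableEq A] (D : ADF A) (v : A → TV)
    (a : A) (S : Set A) : Prop :=
  StronglyJustified D v S a ∧
  ∀ S' : Set A, S'.ncard < S.ncard → ¬ StronglyJustified D v S' a

/-- An interpretation is strongly admissible iff every argument assigned `t`/`f`
is strongly acceptable/deniable w.r.t. `v` and some set `S`. -/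
def StronglyAdmissible {A : Type*} [DecidableEq A] (D : ADF A) (v : A → TV) : Prop :=
  ∀ a : A, v a ≠ TV.u → ∃ S : Set A, StronglyJustified D v S a

/-- `g` is the grounded interpretation of `D`: the least fixed point of `Γ_D`. -/
def IsGrounded {A : Type*} (D : ADF A) (g : A → TV) : Prop :=
  Gamma D g = g ∧ ∀ w : A → TV, Gamma D w = w → ILE g w

/-- An interpretation is admissible iff `v ≤_i Γ_D(v)`. -/
def Admissible {A : Type*} (D : ADF A) (v : A → TV) : Prop :=
  ILE v (Gamma D v)

/-- An interpretation is conflict-free. -/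
def ConflictFree {A : Type*} (D : ADF A) (v : A → TV) : Prop :=
  ∀ a : A, (v a = TV.t → ∃ w : A → Bool, Completes w v ∧ D.C a w = true) ∧
           (v a = TV.f → Unsat (D.C a) v)

/-- The join of two interpretations: take `v`'s value where defined, else `w`'s. -/
def joinI {A : Type*} (v w : A → TV) : A → TV :=
  fun a => if v a = TV.u then w a else v a

/-!
Only the outermost level of the recursion in strong acceptability matters. Raising an interpretation
in the information order removes completions, so an acceptance condition that is irrefutable or
unsatisfiable under `v|_P` is so under `v`. If `v a = f`, this is the claim; if `v a = t`, any
completion of `v` is a witness.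
-/

section Completions

variable {A : Type*} {v v' : A → TV} {φ : (A → Bool) → Bool}

theorem restrictTV_ile (v : A → TV) (P : Set A) : ILE (restrictTV v P) v := by
  intro b
  by_cases hb : b ∈ P
  · exact .inr (if_pos hb)
  · exact .inl (if_neg hb)

theorem exists_completes (v : A → TV) : ∃ w : A → Bool, Completes w v :=
  ⟨fun b => decide (v b = TV.t), fun b => ⟨fun hb => by simp [hb], fun hb => by simp [hb]⟩⟩

theorem Completes.anti {w : A → Bool} (hw : Completes w v') (h : ILE v v') : Completes w v := by
  intro b
  rcases h b with hu | heq
  · simp [hu]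
  · exact heq ▸ hw b

theorem Irrefutable.mono (hφ : Irrefutable φ v) (h : ILE v v') : Irrefutable φ v' :=
  fun w hw => hφ w (hw.anti h)

theorem Unsat.mono (hφ : Unsat φ v) (h : ILE v v') : Unsat φ v' :=
  fun w hw => hφ w (hw.anti h)

theorem Irrefutable.exists_completes_eq_true (hφ : Irrefutable φ v) :
    ∃ w : A → Bool, Completes w v ∧ φ w = true :=
  (exists_completes v).imp fun w hw => ⟨hw, hφ w hw⟩

end Completions

section StrongAdmissibility

variable {A : Type*} [DecidableEq A] {D : ADF A} {v : A → TV} {S E : Set A} {a : A}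

theorem SJrel.irrefutable (h : SJrel D v S E a) (ha : v a = TV.t) : Irrefutable (D.C a) v := by
  cases h with
  | acc _ _ P _ _ hirr _ => exact hirr.mono (restrictTV_ile v P)
  | den _ _ _ hf => simp [ha] at hf

theorem SJrel.unsat (h : SJrel D v S E a) (ha : v a = TV.f) : Unsat (D.C a) v := by
  cases h with
  | acc _ _ _ ht => simp [ha] at ht
  | den _ _ P _ _ hunsat _ => exact hunsat.mono (restrictTV_ile v P)

theorem strongly_admissible_is_conflict_free_general (D : ADF A) (v : A → TV)
    (hv : StronglyAdmissible D v) : ConflictFree D v := by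
  refine fun a => ⟨fun ha => ?_, fun ha => ?_⟩
  · obtain ⟨S, hS⟩ := hv a (by simp [ha])
    exact (SJrel.irrefutable hS ha).exists_completes_eq_true
  · obtain ⟨S, hS⟩ := hv a (by simp [ha])
    exact SJrel.unsat hS ha

end StrongAdmissibility

/-- Every strongly admissible interpretation is conflict-free. -/
theorem strongly_admissible_is_conflict_free {A : Type*} [Fintype A] [DecidableEq A]
    (D : ADF A) (v : A → TV) (hv : StronglyAdmissible D v) :
    ConflictFree D v :=
  strongly_admissible_is_conflict_free_general D v hv
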